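/- For every integer N ≥ 1 and every ε ∈ (0, π), there exist constants C > 0 and R > 0 such that for all z ∈ ℂ with |z| ≥ R and |arg(z)| ≤ π − ε, | ψ₁(z) − (1/2)log²(z) + log(z)/(2z) − Σ_{k=1}^{N} (B_{2k}/(2k z^{2k})) ( Σ_{j=1}^{2k−2} 1/j + 1/(2k−1) − log(z) ) | ≤ C |z|^{−2N−2} (1 + log|z|). (This is the asymptotic expansion ψ₁(z) ∼ (1/2)log²(z) − log(z)/(2z) + Σ_{k=1}^∞ (B_{2k}/(2k z^{2k}))(Σ_{j=1}^{2k−2} 1/j + 1/(2k−1) − log(z)) as z → ∞ in |arg(z)| < π.) -/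

import Mathlib

open Filter Topology MeasureTheory

noncomputable def eulerGamma : ℝ := Real.eulerMascheroniConstant

noncomputable def gamma1 : ℝ :=
  limUnder atTop (fun n : ℕ => ∑ j ∈ Finset.Icc 1 n, Real.log j / j - (Real.log n) ^ 2 / 2)

noncomputable def psi1 (z : ℂ) : ℂ :=
  -(gamma1 : ℂ) - Complex.log z / z -
    ∑' n : ℕ, (Complex.log (((n : ℂ) + 1) + z) / (((n : ℂ) + 1) + z)
      - Complex.log ((n : ℂ) + 1) / ((n : ℂ) + 1))

/-- Iterated derivatives of `log² / 2`. -/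
noncomputable def gg : ℕ → ℂ → ℂ
  | 0, z => Complex.log z ^ 2 / 2
  | (m + 1), z => (-1) ^ m * (m.factorial : ℂ) * (Complex.log z - (harmonic m : ℂ)) / z ^ (m + 1)

lemma gg_one (z : ℂ) : gg 1 z = Complex.log z / z := by
  simp [gg]

lemma gg_hasDerivAt (m : ℕ) {z : ℂ} (hz : z ∈ Complex.slitPlane) :
    HasDerivAt (gg m) (gg (m + 1) z) z := by
  have hz0 : z ≠ 0 := Complex.slitPlane_ne_zero hz
  have hl := Complex.hasDerivAt_log hz
  cases m with
  | zero =>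
    have h := (hl.pow 2).div_const 2
    have e : gg 0 = fun z => Complex.log z ^ 2 / 2 := by funext w; rfl
    rw [e, gg_one]
    convert! h using 1
    field_simp
    norm_num
    ring
  | succ m =>
    have h := ((hl.sub_const (harmonic m : ℂ)).const_mul
      ((-1) ^ m * (m.factorial : ℂ))).div (hasDerivAt_pow (m + 1) z) (pow_ne_zero _ hz0)
    have e : gg (m + 1) = fun z => (-1) ^ m * (m.factorial : ℂ) *
      (Complex.log z - (harmonic m : ℂ)) / z ^ (m + 1) := by funext w; rfl
    rw [e]
    convert! h using 1
    simp only [gg, harmonic_succ, Nat.factorial_succ]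
    have : (m : ℂ) + 1 ≠ 0 := by exact_mod_cast Nat.succ_ne_zero m
    push_cast
    field_simp
    ring

lemma gg_bound (m : ℕ) : ∃ K > 0, ∀ w : ℂ, 1 ≤ ‖w‖ →
    ‖gg (m + 1) w‖ ≤ K * (1 + Real.log ‖w‖) / ‖w‖ ^ (m + 1) := by
  refine ⟨m.factorial * (1 + Real.pi + ‖(harmonic m : ℂ)‖), by positivity, fun w hw => ?_⟩
  have hlog : 0 ≤ Real.log ‖w‖ := Real.log_nonneg hw
  have h1 : ‖Complex.log w‖ ≤ Real.log ‖w‖ + Real.pi := by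
    refine (Complex.norm_le_abs_re_add_abs_im _).trans ?_
    rw [Complex.log_re, Complex.log_im, abs_of_nonneg hlog]
    linarith [Complex.abs_arg_le_pi w]
  have h2 := norm_sub_le (Complex.log w) (harmonic m : ℂ)
  simp only [gg, norm_div, norm_mul, norm_pow, norm_neg, norm_one, one_pow, one_mul,
    Complex.norm_natCast]
  rw [mul_assoc]
  gcongr
  have := Real.pi_pos
  have h3 := norm_nonneg (harmonic m : ℂ)
  nlinarith [mul_nonneg this.le hlog, mul_nonneg h3 hlog]

/-- normalised Bernoulli polynomial -/
noncomputable def bb (m : ℕ) (t : ℝ) : ℂ := ((bernoulliFun m t / m.factorial : ℝ) : ℂ)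

lemma bb_hasDerivAt (m : ℕ) (t : ℝ) :
    HasDerivAt (fun t => bb (m + 1) t) (bb m t) t := by
  have h := ((hasDerivAt_bernoulliFun (m + 1) t).div_const ((m + 1).factorial : ℝ)).ofReal_comp
  unfold bb
  convert! h using 2
  simp only [Nat.add_sub_cancel, Nat.factorial_succ]
  push_cast
  field_simp

lemma bb_zero_hasDerivAt (t : ℝ) : HasDerivAt (fun t => bb 0 t) 0 t := by
  have : (fun t => bb 0 t) = fun _ => 1 := by
    funext t; simp [bb]
  rw [this]
  exact hasDerivAt_const t 1

lemma bb_bound (m : ℕ) : ∃ K > 0, ∀ t ∈ Set.Icc (0 : ℝ) 1, ‖bb m t‖ ≤ K := by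
  have hc : Continuous (bb m) := by
    unfold bb
    have := continuous_bernoulliFun (k := m)
    fun_prop
  obtain ⟨K, hK⟩ := isCompact_Icc.exists_bound_of_continuousOn (s := Set.Icc (0 : ℝ) 1)
    hc.continuousOn
  exact ⟨max K 1, by positivity, fun t ht => (hK t ht).trans (le_max_left _ _)⟩

/-- The approximant. -/
noncomputable def AA (M : ℕ) (z : ℂ) : ℂ := ∑ m ∈ Finset.range (M + 1), bb m 0 * gg m z

noncomputable def GG (M : ℕ) (z : ℂ) (t : ℝ) : ℂ :=
  ∑ m ∈ Finset.range (M + 1), bb m (1 - t) * gg m (z + t)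

lemma GG_hasDerivAt (M : ℕ) (z : ℂ) (t : ℝ) (h : z + t ∈ Complex.slitPlane) :
    HasDerivAt (GG M z) (bb M (1 - t) * gg (M + 1) (z + t)) t := by
  have hin : HasDerivAt (fun t : ℝ => z + (t : ℂ)) 1 t :=
    (Complex.ofRealCLM.hasDerivAt (x := t)).const_add z
  have hg : ∀ m, HasDerivAt (fun t : ℝ => gg m (z + t)) (gg (m + 1) (z + t)) t := by
    intro m
    have := HasDerivAt.comp t (gg_hasDerivAt m h) hin
    simpa using! this
  have hr : HasDerivAt (fun t : ℝ => 1 - t) (-1) t := by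
    simpa using (hasDerivAt_id t).const_sub 1
  induction M with
  | zero =>
    have e : GG 0 z = fun t : ℝ => gg 0 (z + t) := by
      funext t; simp [GG, bb]
    rw [e]
    have : bb 0 (1 - t) = 1 := by simp [bb]
    rw [this, one_mul]
    exact hg 0
  | succ M ih =>
    have e : GG (M + 1) z = fun t : ℝ => GG M z t + bb (M + 1) (1 - t) * gg (M + 1) (z + t) := by
      funext t; simp only [GG]; rw [Finset.sum_range_succ]
    rw [e]
    have hb : HasDerivAt (fun t : ℝ => bb (M + 1) (1 - t)) (-bb M (1 - t)) t := by
      have := HasDerivAt.scomp t (bb_hasDerivAt M (1 - t)) hr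
      simpa using! this
    convert! ih.add (hb.mul (hg (M + 1))) using 1
    ring

lemma GG_one (M : ℕ) (z : ℂ) : GG M z 1 = AA M (z + 1) := by simp [GG, AA]

lemma GG_zero (M : ℕ) (hM : 1 ≤ M) (z : ℂ) : GG M z 0 = AA M z + gg 1 z := by
  have h : ∀ m, bb m 1 = bb m 0 + if m = 1 then 1 else 0 := by
    intro m
    simp only [bb, bernoulliFun_eval_one]
    split_ifs with h
    · subst h; simp
    · simp
  simp only [GG, AA, sub_zero, h, add_mul, Finset.sum_add_distrib, Complex.ofReal_zero, add_zero]
  simp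
  omega

lemma EM (M : ℕ) (hM : 1 ≤ M) : ∃ K > 0, ∀ (z : ℂ) (y Y : ℝ), 1 ≤ y →
    (∀ t ∈ Set.Icc (0 : ℝ) 1, z + t ∈ Complex.slitPlane ∧ y ≤ ‖z + t‖ ∧ ‖z + t‖ ≤ Y) →
    ‖AA M (z + 1) - AA M z - gg 1 z‖ ≤ K * (1 + Real.log Y) / y ^ (M + 1) := by
  obtain ⟨K, hK, hg⟩ := gg_bound M
  obtain ⟨L, hL, hb⟩ := bb_bound M
  refine ⟨L * K, by positivity, fun z y Y hy h => ?_⟩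
  have := norm_image_sub_le_of_norm_deriv_le_segment_01' (f := GG M z)
    (f' := fun t => bb M (1 - t) * gg (M + 1) (z + t)) (C := L * K * (1 + Real.log Y) / y ^ (M + 1))
    (fun t ht => (GG_hasDerivAt M z t (h t ht).1).hasDerivWithinAt) ?_
  · rw [GG_one, GG_zero M hM] at this
    rwa [sub_sub]
  · intro t ht
    have ht' : t ∈ Set.Icc (0 : ℝ) 1 := ⟨ht.1, ht.2.le⟩
    obtain ⟨_, h2, h3⟩ := h t ht'
    rw [norm_mul, mul_assoc L, mul_div_assoc]
    have h1 := hb (1 - t) ⟨by linarith [ht'.2], by linarith [ht'.1]⟩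
    have h4 := hg (z + t) (hy.trans h2)
    have h5 : 0 ≤ Real.log ‖z + t‖ := Real.log_nonneg (hy.trans h2)
    have h6 : Real.log ‖z + t‖ ≤ Real.log Y := Real.log_le_log (by linarith) h3
    gcongr
    refine h4.trans ?_
    have h7 : 0 ≤ 1 + Real.log Y := by linarith
    gcongr

/-- difference estimate -/
lemma gg_diff (m : ℕ) : ∃ K > 0, ∀ (x : ℝ) (a : ℂ), 2 ≤ x → ‖a‖ ≤ x / 2 →
    ‖gg m (x + a) - gg m x‖ ≤ K * (1 + Real.log (2 * x)) / x ^ (m + 1) * ‖a‖ := by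
  obtain ⟨K, hK, hg⟩ := gg_bound m
  refine ⟨K * 2 ^ (m + 1), by positivity, fun x a hx ha => ?_⟩
  have hx0 : 0 < x := by linarith
  have key : ∀ w ∈ Metric.closedBall (x : ℂ) (x / 2), w ∈ Complex.slitPlane ∧ x / 2 ≤ ‖w‖ ∧
      ‖w‖ ≤ 2 * x := by
    intro w hw
    rw [mem_closedBall_iff_norm] at hw
    have h1 : |(w - x).re| ≤ x / 2 := (Complex.abs_re_le_norm _).trans hw
    have h2 : x / 2 ≤ w.re := by
      have := (abs_le.mp h1).1
      simp at this
      linarith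
    refine ⟨Or.inl (by linarith), h2.trans (Complex.re_le_norm w), ?_⟩
    have : ‖w‖ ≤ ‖w - x‖ + ‖(x : ℂ)‖ := by
      simpa using norm_add_le (w - x) (x : ℂ)
    have h3 : ‖(x : ℂ)‖ = x := by simp [abs_of_pos hx0]
    linarith
  have := Convex.norm_image_sub_le_of_norm_hasDerivWithin_le (𝕜 := ℂ)
    (s := Metric.closedBall (x : ℂ) (x / 2)) (f := gg m) (f' := gg (m + 1)) (x := (x : ℂ))
    (y := x + a) (C := K * 2 ^ (m + 1) * (1 + Real.log (2 * x)) / x ^ (m + 1))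
    (fun w hw => (gg_hasDerivAt m (key w hw).1).hasDerivWithinAt) ?_ (convex_closedBall _ _) ?_ ?_
  · simpa using this
  · intro w hw
    obtain ⟨_, h2, h3⟩ := key w hw
    refine (hg w (by linarith)).trans ?_
    have h5 : 0 ≤ Real.log ‖w‖ := Real.log_nonneg (by linarith)
    have h6 : Real.log ‖w‖ ≤ Real.log (2 * x) := Real.log_le_log (by linarith) h3
    have h7 : 0 ≤ 1 + Real.log (2 * x) := by linarith
    calc K * (1 + Real.log ‖w‖) / ‖w‖ ^ (m + 1)
        ≤ K * (1 + Real.log (2 * x)) / (x / 2) ^ (m + 1) := by gcongr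
      _ = _ := by rw [div_pow]; field_simp
  · simp; linarith
  · simpa [mem_closedBall_iff_norm] using ha

lemma tendsto_log_aux (p : ℕ) (hp : 1 ≤ p) :
    Tendsto (fun x : ℝ => (1 + Real.log (2 * x)) / x ^ p) atTop (𝓝 0) := by
  have h1 : Tendsto (fun x : ℝ => Real.log x / x ^ p) atTop (𝓝 0) := by
    have := (isLittleO_log_rpow_atTop (r := p) (by exact_mod_cast hp)).tendsto_div_nhds_zero
    simpa using this
  have h2 : Tendsto (fun x : ℝ => (1 + Real.log 2) / x ^ p) atTop (𝓝 0) :=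
    tendsto_const_nhds.div_atTop (tendsto_pow_atTop (by omega))
  have := h2.add h1
  rw [add_zero] at this
  refine this.congr' ?_
  filter_upwards [eventually_gt_atTop 0] with x hx
  rw [Real.log_mul (by norm_num) hx.ne']
  ring

lemma summable_log_aux (p : ℕ) (hp : 2 ≤ p) :
    Summable (fun n : ℕ => (1 + Real.log (2 * ((n : ℝ) + 1))) / ((n : ℝ) + 1) ^ p) := by
  have h0 : Summable (fun n : ℕ => (1 + Real.log (2 * (n : ℝ))) / (n : ℝ) ^ p) := by
    have h1 : (fun x : ℝ => (1 + Real.log (2 * x)) / x ^ p) =O[atTop]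
        fun x : ℝ => x ^ (-(3 / 2) : ℝ) := by
      have h2 : (fun x : ℝ => 1 + Real.log (2 * x)) =O[atTop] fun x : ℝ => x ^ (1 / 2 : ℝ) := by
        have h3 : (fun _ : ℝ => 1 + Real.log 2) =O[atTop] fun x : ℝ => x ^ (1 / 2 : ℝ) := by
          refine (Asymptotics.isLittleO_const_left.mpr (Or.inr ?_)).isBigO
          exact tendsto_norm_atTop_atTop.comp (tendsto_rpow_atTop (by norm_num))
        have h4 := h3.add (isLittleO_log_rpow_atTop (r := 1 / 2) (by norm_num)).isBigO
        refine h4.congr' ?_ EventuallyEq.rfl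
        filter_upwards [eventually_gt_atTop 0] with x hx
        rw [Real.log_mul (by norm_num) hx.ne']
        ring
      have h5 : (fun x : ℝ => (x ^ p)⁻¹) =O[atTop] fun x : ℝ => x ^ (-2 : ℝ) := by
        refine Asymptotics.IsBigO.of_bound 1 ?_
        filter_upwards [eventually_ge_atTop 1] with x hx
        have hx0 : 0 < x := by linarith
        rw [Real.rpow_neg hx0.le, one_mul, norm_inv, norm_inv]
        norm_num
        rw [abs_of_pos hx0]
        gcongr
      refine (h2.mul h5).congr' (by simp [div_eq_mul_inv]) ?_
      filter_upwards [eventually_gt_atTop 0] with x hx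
      rw [← Real.rpow_add hx]
      norm_num
    have h6 := h1.comp_tendsto tendsto_natCast_atTop_atTop
    exact summable_of_isBigO_nat (Real.summable_nat_rpow.mpr (by norm_num)) h6
  have := (summable_nat_add_iff 1).mpr h0
  simpa using this

lemma gg_diff_tendsto (a : ℂ) :
    Tendsto (fun n : ℕ => gg 0 (((n : ℝ) : ℂ) + a) - gg 0 ((n : ℝ) : ℂ)) atTop (𝓝 0) := by
  obtain ⟨K, hK, h⟩ := gg_diff 0
  have h1 := (((tendsto_log_aux 1 le_rfl).const_mul K).mul_const ‖a‖).comp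
    tendsto_natCast_atTop_atTop
  simp only [mul_zero, zero_mul] at h1
  refine squeeze_zero_norm' ?_ h1
  filter_upwards [eventually_ge_atTop 2, eventually_ge_atTop ⌈2 * ‖a‖⌉₊] with n hn hn2
  have h2 : (2 : ℝ) ≤ n := by exact_mod_cast hn
  have h3 : 2 * ‖a‖ ≤ n := Nat.ceil_le.mp hn2
  have := h n a h2 (by linarith)
  simpa [mul_div_assoc] using this

lemma gg_tendsto (m : ℕ) (a : ℂ) :
    Tendsto (fun n : ℕ => gg (m + 1) (((n : ℝ) : ℂ) + a)) atTop (𝓝 0) := by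
  obtain ⟨K, hK, h⟩ := gg_bound m
  have ht : Tendsto (fun n : ℕ => ‖((n : ℝ) : ℂ) + a‖) atTop atTop := by
    have : Tendsto (fun n : ℕ => (n : ℝ) - ‖a‖) atTop atTop :=
      tendsto_atTop_add_const_right _ _ tendsto_natCast_atTop_atTop
    refine tendsto_atTop_mono (fun n => ?_) this
    have := norm_sub_le (((n : ℝ) : ℂ) + a) a
    simp at this ⊢
    linarith
  have h1 := ((tendsto_log_aux (m + 1) (by omega)).const_mul K).comp ht
  simp only [mul_zero] at h1
  refine squeeze_zero_norm' ?_ h1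
  filter_upwards [ht.eventually_ge_atTop 1] with n hn
  refine (h _ hn).trans ?_
  simp only [Function.comp, mul_div_assoc]
  gcongr
  linarith

lemma AA_tendsto (M : ℕ) (a : ℂ) :
    Tendsto (fun n : ℕ => AA M (((n : ℝ) : ℂ) + a) - gg 0 ((n : ℝ) : ℂ)) atTop (𝓝 0) := by
  have h0 : bb 0 0 = 1 := by simp [bb]
  have h1 : ∀ n : ℕ, AA M (((n : ℝ) : ℂ) + a) - gg 0 ((n : ℝ) : ℂ) =
      ∑ m ∈ Finset.range M, bb (m + 1) 0 * gg (m + 1) (((n : ℝ) : ℂ) + a) +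
      (gg 0 (((n : ℝ) : ℂ) + a) - gg 0 ((n : ℝ) : ℂ)) := by
    intro n
    rw [AA, Finset.sum_range_succ', h0]
    ring
  simp_rw [h1]
  have h2 : Tendsto (fun n : ℕ => ∑ m ∈ Finset.range M,
      bb (m + 1) 0 * gg (m + 1) (((n : ℝ) : ℂ) + a)) atTop (𝓝 (∑ m ∈ Finset.range M, 0)) := by
    refine tendsto_finsetSum _ fun m _ => ?_
    simpa using (gg_tendsto m a).const_mul (bb (m + 1) 0)
  simpa using h2.add (gg_diff_tendsto a)

lemma gamma1_tendsto : Tendsto (fun n : ℕ => ∑ j ∈ Finset.Icc 1 n, Real.log j / j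
    - (Real.log n) ^ 2 / 2) atTop (𝓝 gamma1) := by
  obtain ⟨K, hK, h⟩ := EM 1 le_rfl
  set T : ℕ → ℂ := fun n => ∑ j ∈ Finset.range n, gg 1 ((j : ℂ) + 1) - AA 1 ((n : ℂ) + 1) with hT
  have hd : ∀ n : ℕ, dist (T n) (T n.succ) ≤
      K * ((1 + Real.log (2 * ((n : ℝ) + 1))) / ((n : ℝ) + 1) ^ 2) := by
    intro n
    have h1 := h ((n : ℂ) + 1) ((n : ℝ) + 1) (2 * ((n : ℝ) + 1)) (by simp) ?_
    · rw [dist_eq_norm, ← mul_div_assoc]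
      have e : T n - T n.succ = AA 1 ((n : ℂ) + 1 + 1) - AA 1 ((n : ℂ) + 1) - gg 1 ((n : ℂ) + 1) := by
        simp only [hT, Nat.succ_eq_add_one, Finset.sum_range_succ]
        push_cast
        ring
      rw [e]
      exact h1
    · intro t ht
      have e : ((n : ℂ) + 1 + t) = (((n : ℝ) + 1 + t : ℝ) : ℂ) := by push_cast; ring
      have hp : 0 < (n : ℝ) + 1 + t := by have := ht.1; positivity
      rw [e]
      refine ⟨Or.inl (by simpa using hp), ?_, ?_⟩
      · rw [Complex.norm_real, Real.norm_of_nonneg hp.le]; linarith [ht.1]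
      · rw [Complex.norm_real, Real.norm_of_nonneg hp.le]
        have : (0 : ℝ) ≤ n := by positivity
        linarith [ht.2]
  have hs : Summable fun n : ℕ => dist (T n) (T n.succ) :=
    Summable.of_nonneg_of_le (fun _ => dist_nonneg) hd
      ((summable_log_aux 2 le_rfl).mul_left K)
  obtain ⟨L, hL⟩ := cauchySeq_tendsto_of_complete (cauchySeq_of_summable_dist hs)
  have h2 := hL.add (AA_tendsto 1 1)
  have h3 := (Complex.continuous_re.tendsto _).comp h2
  unfold gamma1
  refine tendsto_nhds_limUnder ⟨(L + 0).re, h3.congr fun n => ?_⟩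
  have e : T n + (AA 1 (((n : ℝ) : ℂ) + 1) - gg 0 ((n : ℝ) : ℂ)) =
      ((∑ j ∈ Finset.Icc 1 n, Real.log j / j - (Real.log n) ^ 2 / 2 : ℝ) : ℂ) := by
    have e2 : ∑ j ∈ Finset.Icc 1 n, Real.log j / j =
        ∑ j ∈ Finset.range n, Real.log ((j : ℝ) + 1) / ((j : ℝ) + 1) := by
      clear_value T
      clear hT
      induction n with
      | zero => simp
      | succ n ih =>
        rw [Finset.sum_Icc_succ_top (by omega), Finset.sum_range_succ, ih]
        push_cast
        rfl
    rw [e2]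
    simp only [hT, gg_one]
    simp only [gg]
    push_cast
    have e3 : ∀ j : ℕ, Complex.log ((j : ℂ) + 1) = (Real.log ((j : ℝ) + 1) : ℂ) := by
      intro j
      rw [Complex.ofReal_log (by positivity)]
      push_cast; rfl
    have e4 : Complex.log (n : ℂ) = (Real.log (n : ℝ) : ℂ) := by
      rw [Complex.ofReal_log (by positivity)]
      push_cast; rfl
    simp_rw [e3, e4]
    ring
  simp only [Function.comp]
  rw [e, Complex.ofReal_re]

lemma psi1_summable (z : ℂ) : Summable (fun n : ℕ =>
    (Complex.log (((n : ℂ) + 1) + z) / (((n : ℂ) + 1) + z)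
      - Complex.log ((n : ℂ) + 1) / ((n : ℂ) + 1))) := by
  obtain ⟨K, hK, h⟩ := gg_diff 1
  have hs := ((summable_log_aux 2 le_rfl).mul_left K).mul_right ‖z‖
  refine Summable.of_norm_bounded_eventually_nat hs ?_
  filter_upwards [eventually_ge_atTop 1, eventually_ge_atTop ⌈2 * ‖z‖⌉₊] with n hn hn2
  have h2 : (1 : ℝ) ≤ n := by exact_mod_cast hn
  have h3 : 2 * ‖z‖ ≤ n := Nat.ceil_le.mp hn2
  have := h ((n : ℝ) + 1) z (by linarith) (by linarith)
  rw [gg_one, gg_one] at this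
  push_cast at this
  simpa [mul_div_assoc] using this

lemma psi1_tendsto (z : ℂ) : Tendsto (fun n : ℕ => gg 0 ((n : ℝ) : ℂ) -
    ∑ j ∈ Finset.range (n + 1), gg 1 (z + j)) atTop (𝓝 (psi1 z)) := by
  have h1 := (psi1_summable z).hasSum.tendsto_sum_nat
  have h2 := (Complex.continuous_ofReal.tendsto _).comp gamma1_tendsto
  have h3 := (h2.neg.sub_const (Complex.log z / z)).sub h1
  unfold psi1
  refine h3.congr fun n => ?_
  have e2 : ∑ j ∈ Finset.Icc 1 n, Real.log j / j =
      ∑ j ∈ Finset.range n, Real.log ((j : ℝ) + 1) / ((j : ℝ) + 1) := by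
    clear h1 h2 h3
    induction n with
    | zero => simp
    | succ n ih =>
      rw [Finset.sum_Icc_succ_top (by omega), Finset.sum_range_succ, ih]
      push_cast
      rfl
  have e3 : ∀ j : ℕ, Complex.log ((j : ℂ) + 1) = (Real.log ((j : ℝ) + 1) : ℂ) := by
    intro j
    rw [Complex.ofReal_log (by positivity)]
    push_cast; rfl
  have e4 : Complex.log (n : ℂ) = (Real.log (n : ℝ) : ℂ) := by
    rw [Complex.ofReal_log (by positivity)]
    push_cast; rfl
  have e5 : ∀ j : ℕ, z + ((j + 1 : ℕ) : ℂ) = (j : ℂ) + 1 + z := by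
    intro j; push_cast; ring
  simp only [Function.comp]
  rw [e2, Finset.sum_range_succ', Finset.sum_sub_distrib]
  simp only [gg_one, e5]
  simp only [gg]
  push_cast
  simp_rw [e3, e4]
  rw [add_zero]
  ring

lemma AA_two_mul (N : ℕ) (hN : 1 ≤ N) (z : ℂ) (hz : z ≠ 0) :
    AA (2 * N) z = (1/2) * (Complex.log z) ^ 2 - Complex.log z / (2 * z)
        + ∑ k ∈ Finset.Icc 1 N,
            ((bernoulli (2 * k) : ℂ) / (2 * (k : ℂ) * z ^ (2 * k))) *
              ((∑ j ∈ Finset.Icc 1 (2 * k - 2), 1 / (j : ℂ))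
                + 1 / ((2 * k - 1 : ℕ) : ℂ) - Complex.log z) := by
  have hb : ∀ m, bb m 0 = (bernoulli m : ℂ) / m.factorial := by
    intro m; simp [bb, bernoulliFun_eval_zero]
  have hterm : ∀ k : ℕ, bb (2 * k + 2) 0 * gg (2 * k + 2) z =
      ((bernoulli (2 * (k + 1)) : ℂ) / (2 * ((k + 1 : ℕ) : ℂ) * z ^ (2 * (k + 1)))) *
              ((∑ j ∈ Finset.Icc 1 (2 * (k + 1) - 2), 1 / (j : ℂ))
                + 1 / ((2 * (k + 1) - 1 : ℕ) : ℂ) - Complex.log z) := by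
    intro k
    have e1 : 2 * (k + 1) - 2 = 2 * k := by omega
    have e2 : 2 * (k + 1) - 1 = 2 * k + 1 := by omega
    have e3 : (harmonic (2 * k + 1) : ℂ) = (∑ j ∈ Finset.Icc 1 (2 * k), 1 / (j : ℂ))
        + 1 / ((2 * k + 1 : ℕ) : ℂ) := by
      rw [harmonic_succ, harmonic_eq_sum_Icc]
      push_cast
      simp
    rw [e1, e2, ← e3, hb]
    simp only [gg]
    have h1 : (-1 : ℂ) ^ (2 * k + 1) = -1 := by rw [pow_succ, pow_mul]; simp
    rw [h1, Nat.factorial_succ (2 * k + 1), show 2 * (k + 1) = 2 * k + 1 + 1 by ring]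
    have h2 : ((2 * k + 1).factorial : ℂ) ≠ 0 := by exact_mod_cast Nat.factorial_ne_zero _
    have h3 : (k : ℂ) + 1 ≠ 0 := by exact_mod_cast Nat.succ_ne_zero k
    have h4 : ((2 * k + 1 + 1 : ℕ) : ℂ) = 2 * ((k + 1 : ℕ) : ℂ) := by push_cast; ring
    rw [Nat.cast_mul, h4]
    push_cast
    field_simp
    ring
  induction N, hN using Nat.le_induction with
  | base =>
    have := hterm 0
    simp only [mul_zero, zero_add] at this
    rw [AA, show 2 * 1 + 1 = 3 from rfl, Finset.sum_range_succ, this, Finset.Icc_self,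
      Finset.sum_singleton]
    congr 1
    simp only [Finset.sum_range_succ, Finset.sum_range_zero, hb, gg_one]
    simp [gg]
    field_simp
    ring
  | succ N hN ih =>
    have hstep : AA (2 * (N + 1)) z = AA (2 * N) z + bb (2 * N + 2) 0 * gg (2 * N + 2) z := by
      have h0 : bb (2 * N + 1) 0 = 0 := by
        rw [hb, bernoulli_eq_zero_of_odd ⟨N, rfl⟩ (by omega)]; simp
      rw [AA, AA, show 2 * (N + 1) + 1 = 2 * N + 1 + 1 + 1 by ring, Finset.sum_range_succ,
        Finset.sum_range_succ _ (2 * N + 1), h0]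
      ring
    rw [hstep, ih, hterm, Finset.sum_Icc_succ_top (by omega)]
    ring

lemma log_div_anti {x y : ℝ} (hx : 1 ≤ x) (hxy : x ≤ y) :
    (1 + Real.log y) / y ≤ (1 + Real.log x) / x := by
  have hx0 : 0 < x := by linarith
  have hy0 : 0 < y := by linarith
  have h1 := Real.log_le_sub_one_of_pos (div_pos hy0 hx0)
  rw [Real.log_div hy0.ne' hx0.ne'] at h1
  have h2 := Real.log_nonneg hx
  have h3 : 1 ≤ y / x := (one_le_div hx0).mpr hxy
  have h4 : 1 + Real.log y ≤ (1 + Real.log x) * (y / x) := by nlinarith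
  rw [div_le_iff₀ hy0]
  refine h4.trans_eq ?_
  ring

lemma sum_inv_sq (x : ℝ) (hx : 1 ≤ x) (n : ℕ) :
    ∑ j ∈ Finset.range n, 1 / (x + j) ^ 2 ≤ 2 / x := by
  have h : ∑ j ∈ Finset.range n, 1 / (x + j) ^ 2 ≤ 2 / x - 2 / (x + n) := by
    induction n with
    | zero => simp
    | succ n ih =>
      rw [Finset.sum_range_succ]
      have hn : (0 : ℝ) ≤ n := by positivity
      have hy : 1 ≤ x + n := by linarith
      have hstep : 1 / (x + n) ^ 2 ≤ 2 / (x + n) - 2 / (x + n + 1) := by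
        generalize x + (n : ℝ) = y at hy
        have hy0 : 0 < y := by linarith
        have e : 2 / y - 2 / (y + 1) = 2 / (y * (y + 1)) := by field_simp; ring
        rw [e, div_le_div_iff₀ (by positivity) (by positivity)]
        nlinarith
      push_cast
      rw [← add_assoc]
      linarith
  have : 0 ≤ 2 / (x + n) := by positivity
  linarith

lemma sector (ε : ℝ) (hε : 0 < ε) (hε' : ε < Real.pi) :
    ∃ c > 0, c ≤ 1 ∧ ∀ (z : ℂ), z ≠ 0 → |Complex.arg z| ≤ Real.pi - ε → ∀ t : ℝ, 0 ≤ t →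
      z + t ∈ Complex.slitPlane ∧ c * (‖z‖ + t) ≤ ‖z + t‖ := by
  have hcos : Real.cos ε < 1 := by
    have := Real.cos_lt_cos_of_nonneg_of_le_pi le_rfl hε'.le hε
    simpa using this
  have hcos' : -1 ≤ Real.cos ε := Real.neg_one_le_cos ε
  have ha : 0 < (1 - Real.cos ε) / 2 := by linarith
  refine ⟨√((1 - Real.cos ε) / 2), Real.sqrt_pos.mpr ha, ?_, fun z hz harg t ht => ⟨?_, ?_⟩⟩
  · rw [Real.sqrt_le_iff]; constructor <;> linarith
  · have hs : z ∈ Complex.slitPlane := by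
      rw [Complex.mem_slitPlane_iff_arg]
      refine ⟨fun h => ?_, hz⟩
      rw [h, abs_of_pos Real.pi_pos] at harg
      linarith
    rcases hs with h | h
    · left; simp; linarith
    · right; simpa using h
  · have hre : -(‖z‖ * Real.cos ε) ≤ z.re := by
      have h1 : Real.cos (Real.pi - ε) ≤ Real.cos |z.arg| :=
        Real.cos_le_cos_of_nonneg_of_le_pi (abs_nonneg _) (by linarith) harg
      rw [Real.cos_abs, Real.cos_pi_sub] at h1
      have h2 := Complex.norm_mul_cos_arg z
      nlinarith [norm_nonneg z]
    have hsq : ‖z + t‖ ^ 2 = ‖z‖ ^ 2 + 2 * t * z.re + t ^ 2 := by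
      rw [Complex.sq_norm, Complex.sq_norm, Complex.normSq_apply, Complex.normSq_apply]
      simp
      ring
    refine (pow_le_pow_iff_left₀ (by positivity) (norm_nonneg _) two_ne_zero).mp ?_
    rw [mul_pow, Real.sq_sqrt ha.le, hsq]
    nlinarith [mul_le_mul_of_nonneg_left hre ht, mul_nonneg (by linarith : 0 ≤ 1 + Real.cos ε)
      (sq_nonneg (‖z‖ - t))]

lemma AA_telescope (M : ℕ) (z : ℂ) (n : ℕ) :
    ∑ j ∈ Finset.range n, (AA M (z + j + 1) - AA M (z + j) - gg 1 (z + j)) =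
      AA M (z + n) - AA M z - ∑ j ∈ Finset.range n, gg 1 (z + j) := by
  induction n with
  | zero => simp
  | succ n ih =>
    rw [Finset.sum_range_succ, ih, Finset.sum_range_succ]
    push_cast
    rw [add_assoc z]
    ring

lemma main_bound (N : ℕ) (ε : ℝ) (hε : 0 < ε) (hε' : ε < Real.pi) :
    ∃ C > 0, ∃ R ≥ 1, ∀ z : ℂ, R ≤ ‖z‖ → |Complex.arg z| ≤ Real.pi - ε →
      ‖psi1 z - AA (2 * (N + 1)) z‖ ≤ C * (1 + Real.log ‖z‖) / ‖z‖ ^ (2 * N + 2) := by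
  obtain ⟨c, hc, hc1, hsec⟩ := sector ε hε hε'
  obtain ⟨K, hK, hEM⟩ := EM (2 * (N + 1)) (by omega)
  set M := 2 * (N + 1) with hM
  set K' : ℝ := K * 2 / c ^ (M + 1) with hK'
  have hK'0 : 0 < K' := by positivity
  refine ⟨K' * 2, by positivity, 1 / c, (one_le_div hc).mpr hc1, fun z hz harg => ?_⟩
  have hz1 : 1 ≤ ‖z‖ := ((one_le_div hc).mpr hc1).trans hz
  have hz0 : z ≠ 0 := by
    rintro rfl; simp at hz1; linarith
  have hcz : 1 ≤ c * ‖z‖ := by rw [div_le_iff₀ hc] at hz; linarith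
  set x := ‖z‖ with hx
  have hlogx := Real.log_nonneg hz1
  have hE : ∀ j : ℕ, ‖AA M (z + j + 1) - AA M (z + j) - gg 1 (z + j)‖ ≤
      K' * ((1 + Real.log x) / x) / x ^ (2 * N) * (1 / (x + j) ^ 2) := by
    intro j
    have hj : (0 : ℝ) ≤ j := by positivity
    have h1 := hEM (z + j) (c * (x + j)) (2 * (x + j)) (by nlinarith) ?_
    · refine h1.trans ?_
      have hy : 1 ≤ x + j := by linarith
      have hxy : x ≤ x + j := by linarith
      generalize x + (j : ℝ) = y at hy hxy
      have hlogy := Real.log_nonneg hy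
      have h2 : 1 + Real.log (2 * y) ≤ 2 * (1 + Real.log y) := by
        rw [Real.log_mul (by norm_num) (by linarith)]
        have := Real.log_two_lt_d9
        linarith
      have h3 := log_div_anti hz1 hxy
      have hy0 : 0 < y := by linarith
      calc K * (1 + Real.log (2 * y)) / (c * y) ^ (M + 1)
          ≤ K * (2 * (1 + Real.log y)) / (c * y) ^ (M + 1) := by gcongr
        _ = K' * ((1 + Real.log y) / y) / y ^ (2 * N) * (1 / y ^ 2) := by
            rw [hK', show M + 1 = 2 * N + 3 by omega]
            field_simp
            ring
        _ ≤ K' * ((1 + Real.log x) / x) / x ^ (2 * N) * (1 / y ^ 2) := by gcongr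
    · intro t ht
      obtain ⟨h1, h2⟩ := hsec z hz0 harg (j + t) (by linarith [ht.1])
      have e : z + j + t = z + ((j + t : ℝ) : ℂ) := by push_cast; ring
      rw [e]
      refine ⟨h1, le_trans ?_ h2, ?_⟩
      · gcongr; linarith [ht.1]
      · refine (norm_add_le _ _).trans ?_
        rw [Complex.norm_real, Real.norm_of_nonneg (by linarith [ht.1])]
        linarith [ht.2]
  have hlim : Tendsto (fun n : ℕ => ∑ j ∈ Finset.range (n + 1),
      (AA M (z + j + 1) - AA M (z + j) - gg 1 (z + j))) atTop (𝓝 (psi1 z - AA M z)) := by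
    have h1 := ((psi1_tendsto z).sub_const (AA M z)).add (AA_tendsto M (z + 1))
    rw [add_zero] at h1
    refine h1.congr fun n => ?_
    rw [AA_telescope]
    have e : z + ((n + 1 : ℕ) : ℂ) = ((n : ℝ) : ℂ) + (z + 1) := by push_cast; ring
    rw [e]
    ring
  refine le_of_tendsto' hlim.norm fun n => ?_
  refine (norm_sum_le _ _).trans ((Finset.sum_le_sum fun j _ => hE j).trans ?_)
  rw [← Finset.mul_sum]
  have hx0 : 0 < x := by linarith
  calc K' * ((1 + Real.log x) / x) / x ^ (2 * N) * ∑ j ∈ Finset.range (n + 1), 1 / (x + j) ^ 2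
      ≤ K' * ((1 + Real.log x) / x) / x ^ (2 * N) * (2 / x) := by
        gcongr
        exact sum_inv_sq x hz1 _
    _ = K' * 2 * (1 + Real.log x) / x ^ (2 * N + 2) := by
        field_simp
        ring

theorem stmt5 (N : ℕ) (hN : 1 ≤ N) (ε : ℝ) (hε : 0 < ε) (hε' : ε < Real.pi) :
    ∃ C > 0, ∃ R > 0, ∀ z : ℂ, R ≤ ‖z‖ → |Complex.arg z| ≤ Real.pi - ε →
      ‖psi1 z - (1/2) * (Complex.log z) ^ 2 + Complex.log z / (2 * z)
        - ∑ k ∈ Finset.Icc 1 N,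
            ((bernoulli (2 * k) : ℂ) / (2 * (k : ℂ) * z ^ (2 * k))) *
              ((∑ j ∈ Finset.Icc 1 (2 * k - 2), 1 / (j : ℂ))
                + 1 / ((2 * k - 1 : ℕ) : ℂ) - Complex.log z)‖
        ≤ C * (1 + Real.log ‖z‖) / ‖z‖ ^ (2 * N + 2) := by

  obtain ⟨C, hC, R, hR, h⟩ := main_bound N ε hε hε'
  obtain ⟨K, hK, hg⟩ := gg_bound (2 * N + 1)
  refine ⟨C + ‖bb (2 * N + 2) 0‖ * K, by positivity, R, by linarith, fun z hz harg => ?_⟩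
  have hz1 : 1 ≤ ‖z‖ := hR.trans hz
  have hz0 : z ≠ 0 := by
    rintro rfl; simp at hz1; linarith
  have hlog := Real.log_nonneg hz1
  have e1 := AA_two_mul N hN z hz0
  have hstep : AA (2 * (N + 1)) z = AA (2 * N) z + bb (2 * N + 2) 0 * gg (2 * N + 2) z := by
    have h0 : bb (2 * N + 1) 0 = 0 := by
      simp [bb, bernoulliFun_eval_zero, bernoulli_eq_zero_of_odd ⟨N, rfl⟩ (by omega : 1 < 2 * N + 1)]
    rw [AA, AA, show 2 * (N + 1) + 1 = 2 * N + 1 + 1 + 1 by ring, Finset.sum_range_succ,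
      Finset.sum_range_succ _ (2 * N + 1), h0]
    ring
  have e2 : ∀ a b d s : ℂ, a - b + d - s = a - (b - d + s) := by intros; ring
  rw [e2, ← e1]
  have e3 : psi1 z - AA (2 * N) z = (psi1 z - AA (2 * (N + 1)) z) +
      bb (2 * N + 2) 0 * gg (2 * N + 2) z := by rw [hstep]; ring
  rw [e3]
  refine (norm_add_le _ _).trans ?_
  rw [norm_mul]
  have h1 := h z hz harg
  have h2 := mul_le_mul_of_nonneg_left (hg z hz1) (norm_nonneg (bb (2 * N + 2) 0))
  refine (add_le_add h1 h2).trans_eq ?_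
  ring
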